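/- Let n ≥ 3 be odd, m = (n+1)/2, B = e₁ ∈ ℝ^{n+1} and C = e_{m+1}ᵀ. The set of θ ∈ ℝ^n for which the controllability matrix [B, A(θ)B, …, A(θ)ⁿB] fails to be invertible, or the observability matrix with rows C, C A(θ), …, C A(θ)ⁿ fails to be invertible, has Lebesgue measure zero in ℝ^n. (The exchange model with transverse field measured via Y₁ is minimal for almost all parameter values.) -/

import Mathlib

open Matrix

/-- For `n = 2m-1` (odd), the `m×m` symmetric tridiagonal matrix `Ā(θ)` with
`Ā_{i,i} = θ_{2i-1}` and `Ā_{i,i+1} = Ā_{i+1,i} = -θ_{2i}` (1-indexed). -/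
def Abar (m : ℕ) (θ : Fin (2 * m - 1) → ℝ) : Matrix (Fin m) (Fin m) ℝ :=
  Matrix.of fun i j =>
    if i = j then θ ⟨2 * (i : ℕ), by have := i.isLt; omega⟩
    else if h : (i : ℕ) + 1 = (j : ℕ) then -θ ⟨2 * (i : ℕ) + 1, by have := j.isLt; omega⟩
    else if h' : (j : ℕ) + 1 = (i : ℕ) then -θ ⟨2 * (j : ℕ) + 1, by have := i.isLt; omega⟩
    else 0

/-- The `(n+1)×(n+1)` block matrix `A(θ) = [[0, Ā(θ)], [-Ā(θ), 0]]` (with `n+1 = 2m`,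
rows/columns indexed by `Fin m ⊕ Fin m`). -/
def Afull (m : ℕ) (θ : Fin (2 * m - 1) → ℝ) :
    Matrix (Fin m ⊕ Fin m) (Fin m ⊕ Fin m) ℝ :=
  Matrix.fromBlocks 0 (Abar m θ) (-(Abar m θ)) 0


open MeasureTheory in
theorem mvpoly_null : ∀ (n : ℕ) (p : MvPolynomial (Fin n) ℝ), p ≠ 0 →
    volume {x : Fin n → ℝ | MvPolynomial.eval x p = 0} = 0 := by
  intro n
  induction n with
  | zero =>
    intro p hp
    have : {x : Fin 0 → ℝ | MvPolynomial.eval x p = 0} = ∅ := by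
      ext x
      simp only [Set.mem_ofPred_eq, Set.mem_empty_iff_false, iff_false]
      intro h
      apply hp
      apply MvPolynomial.funext
      intro y
      rw [Subsingleton.elim y x, h, map_zero]
    rw [this]; simp
  | succ n ih =>
    intro p hp
    have hq : MvPolynomial.finSuccEquiv ℝ n p ≠ 0 := by
      intro h
      exact hp ((MvPolynomial.finSuccEquiv ℝ n).injective (by rw [h, map_zero]))
    obtain ⟨k, hk⟩ : ∃ k, (MvPolynomial.finSuccEquiv ℝ n p).coeff k ≠ 0 := by
      by_contra! h
      exact hq (Polynomial.ext (by simpa using h))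
    have hmp := (volume_preserving_piFinSuccAbove (fun _ : Fin (n+1) => ℝ) 0).symm
    have hS : MeasurableSet {x : Fin (n+1) → ℝ | MvPolynomial.eval x p = 0} :=
      (isClosed_eq (MvPolynomial.continuous_eval p) continuous_const).measurableSet
    rw [← hmp.measure_preimage hS.nullMeasurableSet]
    have hS' := hmp.measurable hS
    rw [Measure.volume_eq_prod,
      ← (Measure.measurePreserving_swap (μ := (volume : Measure (Fin n → ℝ)))
        (ν := (volume : Measure ℝ))).measure_preimage hS'.nullMeasurableSet,
      Measure.measure_prod_null (measurable_swap hS')]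
    have hy : ∀ᵐ y : Fin n → ℝ, MvPolynomial.eval y
        ((MvPolynomial.finSuccEquiv ℝ n p).coeff k) ≠ 0 := by
      rw [ae_iff]
      simpa using ih _ hk
    filter_upwards [hy] with y hy
    have hr : Polynomial.map (MvPolynomial.eval y) (MvPolynomial.finSuccEquiv ℝ n p) ≠ 0 := by
      intro h
      apply hy
      rw [← Polynomial.coeff_map, h, Polynomial.coeff_zero]
    refine measure_mono_null ?_ ((Polynomial.finite_setOfPred_isRoot hr).measure_zero _)
    intro t ht
    simp only [Set.mem_preimage, Set.mem_ofPred_eq, Prod.swap_prod_mk] at ht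
    change Polynomial.eval _ _ = 0
    rw [← MvPolynomial.eval_eq_eval_mv_eval', ← ht]
    have hc : (MeasurableEquiv.piFinSuccAbove (fun _ : Fin (n+1) => ℝ) 0).symm (t, y)
        = (Fin.cons t y : Fin (n+1) → ℝ) := by
      exact Fin.insertNth_zero' t y
    rw [hc]

/-- polynomial functions -/
noncomputable def PolyFun (n : ℕ) : Subalgebra ℝ ((Fin n → ℝ) → ℝ) :=
  (MvPolynomial.aeval (R := ℝ) (fun (i : Fin n) (x : Fin n → ℝ) => x i)).range

theorem polyFun_null (n : ℕ) (f : (Fin n → ℝ) → ℝ) (hf : f ∈ PolyFun n) (x0 : Fin n → ℝ)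
    (h0 : f x0 ≠ 0) : MeasureTheory.volume {x | f x = 0} = 0 := by
  obtain ⟨p, rfl⟩ := hf
  have key : ∀ x, (MvPolynomial.aeval (R := ℝ) (fun (i : Fin n) (x : Fin n → ℝ) => x i)) p x
      = MvPolynomial.eval x p := by
    intro x
    clear h0
    induction p using MvPolynomial.induction_on with
    | C a => simp
    | add p q hp hq => simp only [map_add, Pi.add_apply, hp, hq]
    | mul_X p i hp => simp only [map_mul, Pi.mul_apply, hp, MvPolynomial.aeval_X, MvPolynomial.eval_X]
  have hp : p ≠ 0 := by
    rintro rfl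
    exact h0 (by simp)
  have := mvpoly_null n p hp
  simp only [← key] at this
  exact this

theorem polyFun_coord (n : ℕ) (i : Fin n) : (fun x => x i) ∈ PolyFun n :=
  ⟨MvPolynomial.X i, by simp⟩

theorem polyFun_const (n : ℕ) (c : ℝ) : (fun _ => c) ∈ PolyFun n :=
  (PolyFun n).algebraMap_mem c

theorem polyFun_sum {ι : Type*} (n : ℕ) (s : Finset ι) (f : ι → (Fin n → ℝ) → ℝ)
    (h : ∀ i ∈ s, f i ∈ PolyFun n) : (fun x => ∑ i ∈ s, f i x) ∈ PolyFun n := by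
  have := sum_mem h
  convert this using 1
  ext x; simp

theorem polyFun_prod {ι : Type*} (n : ℕ) (s : Finset ι) (f : ι → (Fin n → ℝ) → ℝ)
    (h : ∀ i ∈ s, f i ∈ PolyFun n) : (fun x => ∏ i ∈ s, f i x) ∈ PolyFun n := by
  have := prod_mem h
  convert this using 1
  ext x; simp

theorem polyFun_mul (n : ℕ) (f g : (Fin n → ℝ) → ℝ)
    (hf : f ∈ PolyFun n) (hg : g ∈ PolyFun n) : (fun x => f x * g x) ∈ PolyFun n :=
  mul_mem hf hg

theorem polyFun_det {ι : Type*} [Fintype ι] [DecidableEq ι] (n : ℕ)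
    (M : (Fin n → ℝ) → Matrix ι ι ℝ) (h : ∀ i j, (fun x => M x i j) ∈ PolyFun n) :
    (fun x => (M x).det) ∈ PolyFun n := by
  simp only [Matrix.det_apply']
  refine polyFun_sum _ _ _ fun σ _ => ?_
  refine polyFun_mul _ _ _ (polyFun_const _ _) ?_
  exact polyFun_prod _ _ _ fun i _ => h _ _

theorem polyFun_pow {ι : Type*} [Fintype ι] [DecidableEq ι] (n : ℕ)
    (M : (Fin n → ℝ) → Matrix ι ι ℝ) (h : ∀ i j, (fun x => M x i j) ∈ PolyFun n) (k : ℕ) :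
    ∀ i j, (fun x => (M x ^ k) i j) ∈ PolyFun n := by
  induction k with
  | zero => intro i j; simp only [pow_zero]; exact polyFun_const _ _
  | succ k ih =>
    intro i j
    simp only [pow_succ, Matrix.mul_apply]
    exact polyFun_sum _ _ _ fun l _ => polyFun_mul _ _ _ (ih _ _) (h _ _)

theorem polyFun_Abar (m : ℕ) (i j : Fin m) : (fun θ => Abar m θ i j) ∈ PolyFun (2*m-1) := by
  simp only [Abar, Matrix.of_apply]
  split_ifs
  · exact polyFun_coord _ _
  · exact neg_mem (polyFun_coord _ _)
  · exact neg_mem (polyFun_coord _ _)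
  · exact polyFun_const _ _

theorem polyFun_Afull (m : ℕ) (i j : Fin m ⊕ Fin m) :
    (fun θ => Afull m θ i j) ∈ PolyFun (2*m-1) := by
  rcases i with i | i <;> rcases j with j | j <;> simp only [Afull, Matrix.fromBlocks_apply₁₁,
    Matrix.fromBlocks_apply₁₂, Matrix.fromBlocks_apply₂₁, Matrix.fromBlocks_apply₂₂,
    Matrix.zero_apply, Matrix.neg_apply]
  · exact polyFun_const _ _
  · exact polyFun_Abar _ _ _
  · exact neg_mem (polyFun_Abar _ _ _)
  · exact polyFun_const _ _

/-- base tridiagonal matrix -/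
noncomputable def Nmat (m : ℕ) : Matrix (Fin m) (Fin m) ℝ :=
  Matrix.of fun i j => if (i : ℕ) + 1 = j ∨ (j : ℕ) + 1 = i then -1 else 0

/-- sample parameter -/
noncomputable def thS (m : ℕ) (s : ℝ) : Fin (2 * m - 1) → ℝ := fun k => if (k : ℕ) % 2 = 0 then 1 else 2 * s

theorem Abar_thS (m : ℕ) (s : ℝ) : Abar m (thS m s) = 1 + (2 * s) • Nmat m := by
  ext i j
  simp only [Abar, thS, Nmat, Matrix.of_apply, Matrix.add_apply, Matrix.smul_apply,
    Matrix.one_apply, Fin.ext_iff, smul_eq_mul]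
  split_ifs <;> first | omega | simp

theorem N_pow (m : ℕ) (hm : 0 < m) (k : ℕ) : ∀ i : Fin m,
    (k < (i : ℕ) → ((Nmat m ^ k) *ᵥ (Pi.single (⟨0, hm⟩ : Fin m) 1)) i = 0) ∧
    ((i : ℕ) = k → ((Nmat m ^ k) *ᵥ (Pi.single (⟨0, hm⟩ : Fin m) 1)) i ≠ 0) := by
  induction k with
  | zero =>
    intro i
    simp only [pow_zero, Matrix.one_mulVec, Pi.single_apply, Fin.ext_iff]
    constructor
    · intro h; rw [if_neg (by omega)]
    · intro h; rw [if_pos h]; exact one_ne_zero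
  | succ k ih =>
    intro i
    rw [pow_succ', ← Matrix.mulVec_mulVec]
    generalize (Nmat m ^ k) *ᵥ (Pi.single (⟨0, hm⟩ : Fin m) 1) = v at ih ⊢
    simp only [Matrix.mulVec, dotProduct, Nmat, Matrix.of_apply]
    constructor
    · intro h
      refine Finset.sum_eq_zero fun j _ => ?_
      split_ifs with hc
      · rw [(ih j).1 (by omega), mul_zero]
      · rw [zero_mul]
    · intro h
      have hk : k < m := by omega
      rw [Finset.sum_eq_single (⟨k, hk⟩ : Fin m)]
      · rw [if_pos (Or.inr (by simp; omega))]
        exact mul_ne_zero (by norm_num) ((ih ⟨k, hk⟩).2 rfl)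
      · intro j _ hj
        have hj' : (j : ℕ) ≠ k := fun h => hj (Fin.ext h)
        split_ifs with hc
        · rw [(ih j).1 (by omega), mul_zero]
        · rw [zero_mul]
      · simp

theorem exists_s (m : ℕ) (hm : 0 < m) : ∃ s : ℝ, s ≠ 0 ∧
    (Matrix.of fun i k : Fin m => (((Nmat m + s • (Nmat m * Nmat m)) ^ (k : ℕ)) *ᵥ
      (Pi.single (⟨0, hm⟩ : Fin m) 1)) i).det ≠ 0 ∧ (1 + (2 * s) • Nmat m).det ≠ 0 := by
  have c1 : Continuous fun s : ℝ => (Matrix.of fun i k : Fin m =>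
      (((Nmat m + s • (Nmat m * Nmat m)) ^ (k : ℕ)) *ᵥ
      (Pi.single (⟨0, hm⟩ : Fin m) 1)) i).det := by
    apply Continuous.matrix_det
    refine continuous_matrix fun i k => ?_
    simp only [Matrix.of_apply]
    refine (continuous_apply i).comp (Continuous.matrix_mulVec ?_ continuous_const)
    fun_prop
  have c2 : Continuous fun s : ℝ => (1 + (2 * s) • Nmat m).det := by
    apply Continuous.matrix_det
    fun_prop
  have h1 := c1.continuousAt (x := 0) |>.eventually_ne (y := 0) (by
    rw [Matrix.det_of_upperTriangular]
    · refine Finset.prod_ne_zero_iff.2 fun i _ => ?_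
      simpa using (N_pow m hm i i).2 rfl
    · intro i j hij
      simpa using (N_pow m hm j i).1 hij)
  have h2 := c2.continuousAt (x := 0) |>.eventually_ne (y := 0) (by simp)
  have h3 := (h1.and h2).filter_mono (nhdsWithin_le_nhds (s := {0}ᶜ))
  obtain ⟨s, hs, hs'⟩ := (h3.and self_mem_nhdsWithin).exists
  exact ⟨s, hs', hs⟩

theorem key_point (m : ℕ) (hm : 0 < m) : ∃ θ : Fin (2 * m - 1) → ℝ, (Abar m θ).det ≠ 0 ∧
    ∀ u : Fin m → ℝ, (∀ j < m, u ⬝ᵥ (((Abar m θ * Abar m θ) ^ j) *ᵥ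
      (Pi.single (⟨0, hm⟩ : Fin m) 1)) = 0) → u = 0 := by
  obtain ⟨s, hs, h1, h2⟩ := exists_s m hm
  refine ⟨thS m s, by rwa [Abar_thS], ?_⟩
  rw [Abar_thS]
  intro u hu
  set P := (1 + (2 * s) • Nmat m) * (1 + (2 * s) • Nmat m) with hP
  set M := Nmat m + s • (Nmat m * Nmat m) with hM
  have hMP : M = (4 * s)⁻¹ • (P - 1) := by
    have : P - 1 = (4 * s) • M := by
      rw [hP, hM]
      simp only [mul_add, add_mul, one_mul, mul_one, smul_add, smul_mul_assoc, mul_smul_comm,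
        smul_smul]
      module
    rw [this, smul_smul, inv_mul_cancel₀ (by simpa using hs), one_smul]
  have hall : ∀ i j, i + j < m → u ⬝ᵥ ((M ^ i * P ^ j) *ᵥ
      (Pi.single (⟨0, hm⟩ : Fin m) 1)) = 0 := by
    intro i
    induction i with
    | zero => intro j hj; simpa using hu j (by omega)
    | succ i ih =>
      intro j hj
      have : M ^ (i+1) * P ^ j = (4 * s)⁻¹ • (M ^ i * P ^ (j+1) - M ^ i * P ^ j) := by
        have h5 : M * P ^ j = (4 * s)⁻¹ • (P ^ (j+1) - P ^ j) := by
          rw [hMP, smul_mul_assoc, sub_mul, one_mul, ← pow_succ']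
        rw [pow_succ M, mul_assoc, h5, mul_smul_comm, mul_sub]
      rw [this, Matrix.smul_mulVec, Matrix.sub_mulVec, dotProduct_smul, dotProduct_sub,
        ih _ (by omega), ih _ (by omega)]
      simp
  by_contra hne
  apply h1
  rw [← Matrix.exists_vecMul_eq_zero_iff]
  refine ⟨u, hne, ?_⟩
  ext k
  have := hall k 0 (by omega)
  rw [pow_zero, mul_one] at this
  exact this

theorem Afull_even (m : ℕ) (θ) (j : ℕ) : Afull m θ ^ (2 * j) =
    (-1 : ℝ) ^ j • Matrix.fromBlocks ((Abar m θ * Abar m θ) ^ j) 0 0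
      ((Abar m θ * Abar m θ) ^ j) := by
  have h2 : Afull m θ ^ 2 = (-1 : ℝ) • Matrix.fromBlocks (Abar m θ * Abar m θ) 0 0
      (Abar m θ * Abar m θ) := by
    rw [pow_two, Afull, Matrix.fromBlocks_multiply, Matrix.fromBlocks_smul]
    simp
  rw [pow_mul, h2, smul_pow]
  congr 1
  induction j with
  | zero => simp
  | succ j ih => rw [pow_succ, ih, Matrix.fromBlocks_multiply]; simp [pow_succ]

theorem Abar_symm (m : ℕ) (θ) : (Abar m θ)ᵀ = Abar m θ := by
  ext i j
  simp only [Abar, Matrix.transpose_apply, Matrix.of_apply, Fin.ext_iff]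
  split_ifs with h1 h2 <;> first | omega | simp_all

theorem Afull_odd (m : ℕ) (θ) (j : ℕ) : Afull m θ ^ (2 * j + 1) =
    (-1 : ℝ) ^ j • Matrix.fromBlocks 0 (Abar m θ * (Abar m θ * Abar m θ) ^ j) 
      (-(Abar m θ * (Abar m θ * Abar m θ) ^ j)) 0 := by
  rw [pow_succ', Afull_even, mul_smul_comm, Afull, Matrix.fromBlocks_multiply]
  simp

theorem final_point (m : ℕ) (hm : 0 < m) : ∃ θ : Fin (2 * m - 1) → ℝ, 
    (Matrix.of fun i k : Fin m ⊕ Fin m =>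
          (Afull m θ ^ ((finSumFinEquiv k : Fin (m + m)) : ℕ)).mulVec
            (Pi.single (Sum.inl (⟨0, hm⟩ : Fin m)) 1) i).det ≠ 0 ∧
    (Matrix.of fun k i : Fin m ⊕ Fin m =>
          Matrix.vecMul (Pi.single (Sum.inr (⟨0, hm⟩ : Fin m)) 1)
            (Afull m θ ^ ((finSumFinEquiv k : Fin (m + m)) : ℕ)) i).det ≠ 0 := by
  obtain ⟨θ, hd, hk⟩ := key_point m hm
  obtain ⟨e, he⟩ : ∃ e : Fin m → ℝ, e = Pi.single (⟨0, hm⟩ : Fin m) 1 := ⟨_, rfl⟩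
  rw [← he] at hk
  set P := Abar m θ * Abar m θ with hP
  have hPs : ∀ j, (P ^ j)ᵀ = P ^ j := by
    intro j; rw [Matrix.transpose_pow, hP, Matrix.transpose_mul, Abar_symm]
  have hk' : ∀ u : Fin m → ℝ, (∀ j < m, u ⬝ᵥ ((Abar m θ * P ^ j) *ᵥ e) = 0) → u = 0 := by
    intro u hu
    have h0 : u ᵥ* Abar m θ = 0 := by
      apply hk
      intro j hj
      rw [← hu j hj, ← Matrix.mulVec_mulVec, ← Matrix.dotProduct_mulVec]
    by_contra hne
    exact hd (Matrix.exists_vecMul_eq_zero_iff.1 ⟨u, hne, h0⟩)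
  have hAPs : ∀ j, (Abar m θ * P ^ j)ᵀ = Abar m θ * P ^ j := by
    intro j
    rw [Matrix.transpose_mul, hPs, Abar_symm]
    exact ((Commute.refl _).mul_left (Commute.refl _)).pow_left j
  refine ⟨θ, ?_, ?_⟩
  · rw [Ne, ← Matrix.exists_vecMul_eq_zero_iff]
    rintro ⟨w, hw, h⟩
    have hall : ∀ k < m + m, w ⬝ᵥ ((Afull m θ ^ k) *ᵥ
        (Pi.single (Sum.inl (⟨0, hm⟩ : Fin m)) 1)) = 0 := by
      intro k hk
      have := congrFun h (finSumFinEquiv.symm ⟨k, hk⟩)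
      simpa only [Matrix.vecMul, Matrix.of_apply, Equiv.apply_symm_apply, Pi.zero_apply] using this
    apply hw
    have e0 : (Pi.single (Sum.inl (⟨0, hm⟩ : Fin m)) 1 : Fin m ⊕ Fin m → ℝ) =
      Sum.elim e 0 := by
      rw [he]; ext i; rcases i with i | i <;> simp [Pi.single_apply]
    obtain ⟨u, v, rfl⟩ : ∃ u v : Fin m → ℝ, w = Sum.elim u v := 
      ⟨w ∘ Sum.inl, w ∘ Sum.inr, by simp⟩
    have hu : u = 0 := hk u fun j hj => by
      have := hall (2 * j) (by omega)
      rw [Afull_even, e0, Matrix.smul_mulVec, Matrix.fromBlocks_mulVec] at this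
      simpa [← hP] using this
    have hv : v = 0 := hk' v fun j hj => by
      have := hall (2 * j + 1) (by omega)
      rw [Afull_odd, e0, Matrix.smul_mulVec, Matrix.fromBlocks_mulVec] at this
      simpa [← hP, Matrix.neg_mulVec] using this
    rw [hu, hv]; simp
  · rw [Ne, ← Matrix.exists_mulVec_eq_zero_iff]
    rintro ⟨w, hw, h⟩
    have hall : ∀ k < m + m, (Pi.single (Sum.inr (⟨0, hm⟩ : Fin m)) 1) ⬝ᵥ ((Afull m θ ^ k) *ᵥ
        w) = 0 := by
      intro k hk
      have := congrFun h (finSumFinEquiv.symm ⟨k, hk⟩)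
      rw [Matrix.dotProduct_mulVec]
      simpa only [Matrix.mulVec, Matrix.of_apply, Equiv.apply_symm_apply, Pi.zero_apply] using this
    apply hw
    have e0 : (Pi.single (Sum.inr (⟨0, hm⟩ : Fin m)) 1 : Fin m ⊕ Fin m → ℝ) =
      Sum.elim (0 : Fin m → ℝ) e := by
      rw [he]; ext i; rcases i with i | i <;> simp [Pi.single_apply]
    obtain ⟨u, v, rfl⟩ : ∃ u v : Fin m → ℝ, w = Sum.elim u v := 
      ⟨w ∘ Sum.inl, w ∘ Sum.inr, by simp⟩
    have hv : v = 0 := hk v fun j hj => by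
      have := hall (2 * j) (by omega)
      rw [Afull_even, e0, Matrix.smul_mulVec, Matrix.fromBlocks_mulVec, dotProduct_smul,
        sumElim_dotProduct_sumElim, ← hP] at this
      rw [dotProduct_comm, ← hPs, Matrix.mulVec_transpose, ← Matrix.dotProduct_mulVec]
      simpa using this
    have hu : u = 0 := hk' u fun j hj => by
      have := hall (2 * j + 1) (by omega)
      rw [Afull_odd, e0, Matrix.smul_mulVec, Matrix.fromBlocks_mulVec, dotProduct_smul,
        sumElim_dotProduct_sumElim, ← hP] at this
      rw [dotProduct_comm, ← hAPs, Matrix.mulVec_transpose, ← Matrix.dotProduct_mulVec]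
      simpa [Matrix.neg_mulVec] using this
    rw [hu, hv]; simp

/-- With `B = e₁` and `C = e_{m+1}ᵀ`, the set of parameters `θ` for which the
controllability matrix `[B, A(θ)B, …, A(θ)ⁿB]` or the observability matrix (with rows
`C, C A(θ), …, C A(θ)ⁿ`) fails to be invertible has Lebesgue measure zero: the exchange
model with transverse field measured via `Y₁` is minimal for almost all parameters. -/
theorem stmt9 (m : ℕ) (hm : 2 ≤ m) :
    MeasureTheory.volume {θ : Fin (2 * m - 1) → ℝ |
      ¬ IsUnit (Matrix.of fun i k : Fin m ⊕ Fin m =>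
          (Afull m θ ^ ((finSumFinEquiv k : Fin (m + m)) : ℕ)).mulVec
            (Pi.single (Sum.inl (⟨0, by omega⟩ : Fin m)) 1) i) ∨
      ¬ IsUnit (Matrix.of fun k i : Fin m ⊕ Fin m =>
          Matrix.vecMul (Pi.single (Sum.inr (⟨0, by omega⟩ : Fin m)) 1)
            (Afull m θ ^ ((finSumFinEquiv k : Fin (m + m)) : ℕ)) i)} = 0 := by
  obtain ⟨θ, h1, h2⟩ := final_point m (by omega)
  simp only [Matrix.isUnit_iff_isUnit_det, isUnit_iff_ne_zero, ne_eq, not_not]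
  rw [Set.ofPred_or]
  refine MeasureTheory.measure_union_null ?_ ?_
  · refine polyFun_null _ _ (polyFun_det _ _ fun i k => ?_) θ h1
    simp only [Matrix.of_apply, Matrix.mulVec, dotProduct]
    exact polyFun_sum _ _ _ fun l _ => polyFun_mul _ _ _
      (polyFun_pow _ _ (polyFun_Afull m) _ _ _) (polyFun_const _ _)
  · refine polyFun_null _ _ (polyFun_det _ _ fun i k => ?_) θ h2
    simp only [Matrix.of_apply, Matrix.vecMul, dotProduct]
    exact polyFun_sum _ _ _ fun l _ => polyFun_mul _ _ _
      (polyFun_const _ _) (polyFun_pow _ _ (polyFun_Afull m) _ _ _)
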